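/- Let V be a finite-dimensional real inner product space, let w₁,…,wₘ, n ∈ V be linearly independent, and let p⁻ ∈ V satisfy ⟨p⁻, wₖ⟩ = 0 for all k = 1,…,m. Consider pairs (λ, α) ∈ ℝᵐ × ℝ such that p⁺ := p⁻ + Σₖ λₖ wₖ + α·n satisfies both ⟨p⁺, p⁺⟩ = ⟨p⁻, p⁻⟩ (conservation of energy) and ⟨p⁺, wₗ⟩ = 0 for all ℓ (post-impact nonholonomic constraints). Then (0,0) is a solution, every solution with α = 0 equals (0,0), and there exists at most one solution with α ≠ 0. In particular there is at most one nontrivial solution (λ,α) ≠ (0,0). -/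

import Mathlib

open RealInnerProductSpace

/-- The elastic nonholonomic impact conditions for multipliers `(lam, α)`:
the post-impact momentum `p⁺ = p⁻ + ∑ k, lam k • w k + α • n` conserves energy
and satisfies the nonholonomic constraints `⟪p⁺, w ℓ⟫ = 0`. -/
def IsImpactSolution {V : Type*} [NormedAddCommGroup V] [InnerProductSpace ℝ V]
    {m : ℕ} (w : Fin m → V) (n : V) (p : V) (lam : Fin m → ℝ) (α : ℝ) : Prop :=
  ⟪p + (∑ k, lam k • w k) + α • n, p + (∑ k, lam k • w k) + α • n⟫ = ⟪p, p⟫ ∧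
  ∀ ℓ : Fin m, ⟪p + (∑ k, lam k • w k) + α • n, w ℓ⟫ = 0

/-!
Let `W` be the span of the `w k` and `v` the component of `n` orthogonal to `W`. Projecting
`p⁺ = p + ∑ k, lam k • w k + α • n` onto `Wᗮ`, which contains both `p` and `p⁺`, gives
`p⁺ = p + α • v`. Energy conservation is then a quadratic equation in `α` with roots `0` and
`-2 * ⟪p, v⟫ / ⟪v, v⟫`, and `α` determines `p⁺`, hence `lam` by linear independence.
-/

instance finiteDimensional_span_range {K M ι : Type*} [DivisionRing K] [AddCommGroup M]
    [Module K M] [Finite ι] (w : ι → M) :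
    FiniteDimensional K (Submodule.span K (Set.range w)) :=
  .span_of_finite K (Set.finite_range w)

section InnerProductSpace

variable {V : Type*} [NormedAddCommGroup V] [InnerProductSpace ℝ V]

theorem inner_add_smul_self_eq_inner_self_iff (p : V) {v : V} (hv : v ≠ 0) (α : ℝ) :
    ⟪p + α • v, p + α • v⟫ = ⟪p, p⟫ ↔ α = 0 ∨ α = -2 * ⟪p, v⟫ / ⟪v, v⟫ := by
  have hvv : ⟪v, v⟫ ≠ 0 := inner_self_ne_zero.2 hv
  have expand : ⟪p + α • v, p + α • v⟫ = ⟪p, p⟫ + α * (2 * ⟪p, v⟫ + α * ⟪v, v⟫) := by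
    rw [real_inner_add_add_self, real_inner_smul_right, real_inner_smul_left,
      real_inner_smul_right]
    ring
  rw [expand, add_eq_left, mul_eq_zero, eq_div_iff hvv, neg_mul,
    add_eq_zero_iff_neg_eq, eq_comm (a := α * _)]

theorem mem_orthogonal_span_range_iff {ι : Type*} (w : ι → V) (x : V) :
    x ∈ (Submodule.span ℝ (Set.range w))ᗮ ↔ ∀ i, ⟪x, w i⟫ = 0 := by
  rw [← Submodule.span_singleton_le_iff_mem, ← Submodule.isOrtho_iff_le, Submodule.isOrtho_span]
  simp

/-- The component of `n` orthogonal to every `w i`. When the `w i` represent the constraint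
covectors and `n` represents `dh`, it is the normal to the impact surface within the constraint
distribution. -/
noncomputable def constrainedNormal {ι : Type*} [Finite ι] (w : ι → V) (n : V) : V :=
  (Submodule.span ℝ (Set.range w))ᗮ.starProjection n

theorem constrainedNormal_ne_zero {ι : Type*} [Finite ι] {w : ι → V} {n : V}
    (hn : n ∉ Submodule.span ℝ (Set.range w)) : constrainedNormal w n ≠ 0 := by
  rwa [constrainedNormal, Ne, Submodule.starProjection_apply_eq_zero_iff,
    Submodule.orthogonal_orthogonal]

end InnerProductSpace

namespace IsImpactSolution

variable {V : Type*} [NormedAddCommGroup V] [InnerProductSpace ℝ V] {m : ℕ}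
  {w : Fin m → V} {n p : V} {lam lam₁ lam₂ : Fin m → ℝ} {α α₁ α₂ : ℝ}

theorem zero (hp : ∀ k, ⟪p, w k⟫ = 0) : IsImpactSolution w n p 0 0 :=
  ⟨by simp, by simpa using hp⟩

theorem postMomentum_eq (hp : ∀ k, ⟪p, w k⟫ = 0) (h : IsImpactSolution w n p lam α) :
    p + (∑ k, lam k • w k) + α • n = p + α • constrainedNormal w n := by
  let W := Submodule.span ℝ (Set.range w)
  have hpost : p + (∑ k, lam k • w k) + α • n ∈ Wᗮ := (mem_orthogonal_span_range_iff w _).2 h.2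
  have hpre : p ∈ Wᗮ := (mem_orthogonal_span_range_iff w p).2 hp
  have hreaction : ∑ k, lam k • w k ∈ Wᗮᗮ :=
    W.le_orthogonal_orthogonal <| Submodule.sum_smul_mem _ _ fun k _ =>
      Submodule.subset_span (Set.mem_range_self k)
  calc p + (∑ k, lam k • w k) + α • n
      = Wᗮ.starProjection (p + (∑ k, lam k • w k) + α • n) :=
        (Submodule.starProjection_eq_self_iff.2 hpost).symm
    _ = p + α • constrainedNormal w n := by
        rw [map_add, map_add, map_smul, Submodule.starProjection_eq_self_iff.2 hpre,
          (Submodule.starProjection_apply_eq_zero_iff Wᗮ).2 hreaction, add_zero, constrainedNormal]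

theorem alpha_eq_zero_or (hn : n ∉ Submodule.span ℝ (Set.range w))
    (hp : ∀ k, ⟪p, w k⟫ = 0) (h : IsImpactSolution w n p lam α) :
    α = 0 ∨ α = -2 * ⟪p, constrainedNormal w n⟫ /
      ⟪constrainedNormal w n, constrainedNormal w n⟫ := by
  rw [← inner_add_smul_self_eq_inner_self_iff p (constrainedNormal_ne_zero hn),
    ← h.postMomentum_eq hp]
  exact h.1

theorem lam_unique (hw : LinearIndependent ℝ w) (hp : ∀ k, ⟪p, w k⟫ = 0)
    (h₁ : IsImpactSolution w n p lam₁ α) (h₂ : IsImpactSolution w n p lam₂ α) :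
    lam₁ = lam₂ := by
  have hpost := (h₁.postMomentum_eq hp).trans (h₂.postMomentum_eq hp).symm
  have hsum : ∑ k, lam₁ k • w k = ∑ k, lam₂ k • w k :=
    add_left_cancel (add_right_cancel hpost)
  exact hw.fintypeLinearCombination_injective hsum

theorem alpha_ne_zero (hw : LinearIndependent ℝ w) (hp : ∀ k, ⟪p, w k⟫ = 0)
    (h : IsImpactSolution w n p lam α) (hne : (lam, α) ≠ (0, 0)) : α ≠ 0 := by
  rintro rfl
  exact hne (congrArg (·, 0) (h.lam_unique hw hp (zero hp)))

theorem unique_of_alpha_ne_zero (hw : LinearIndependent ℝ w)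
    (hn : n ∉ Submodule.span ℝ (Set.range w)) (hp : ∀ k, ⟪p, w k⟫ = 0)
    (hα₁ : α₁ ≠ 0) (hα₂ : α₂ ≠ 0)
    (h₁ : IsImpactSolution w n p lam₁ α₁) (h₂ : IsImpactSolution w n p lam₂ α₂) :
    lam₁ = lam₂ ∧ α₁ = α₂ := by
  obtain rfl : α₁ = α₂ := ((h₁.alpha_eq_zero_or hn hp).resolve_left hα₁).trans
    ((h₂.alpha_eq_zero_or hn hp).resolve_left hα₂).symm
  exact ⟨h₁.lam_unique hw hp h₂, rfl⟩

end IsImpactSolution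

theorem elastic_impact_at_most_one_nontrivial_solution_general
    {V : Type*} [NormedAddCommGroup V] [InnerProductSpace ℝ V]
    {m : ℕ} (w : Fin m → V) (n : V)
    (hind : LinearIndependent ℝ (Fin.snoc w n : Fin (m + 1) → V))
    (p : V) (hp : ∀ k, ⟪p, w k⟫ = 0) :
    IsImpactSolution w n p 0 0 ∧
    (∀ lam : Fin m → ℝ, IsImpactSolution w n p lam 0 → lam = 0) ∧
    (∀ (lam₁ lam₂ : Fin m → ℝ) (α₁ α₂ : ℝ), α₁ ≠ 0 → α₂ ≠ 0 →
      IsImpactSolution w n p lam₁ α₁ → IsImpactSolution w n p lam₂ α₂ →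
      lam₁ = lam₂ ∧ α₁ = α₂) ∧
    (∀ (lam₁ lam₂ : Fin m → ℝ) (α₁ α₂ : ℝ),
      (lam₁, α₁) ≠ (0, 0) → (lam₂, α₂) ≠ (0, 0) →
      IsImpactSolution w n p lam₁ α₁ → IsImpactSolution w n p lam₂ α₂ →
      lam₁ = lam₂ ∧ α₁ = α₂) := by
  obtain ⟨hw, hn⟩ := linearIndependent_finSnoc.1 hind
  refine ⟨.zero hp, fun lam h => h.lam_unique hw hp (.zero hp), ?_, ?_⟩
  · intro lam₁ lam₂ α₁ α₂ hα₁ hα₂ h₁ h₂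
    exact h₁.unique_of_alpha_ne_zero hw hn hp hα₁ hα₂ h₂
  · intro lam₁ lam₂ α₁ α₂ hne₁ hne₂ h₁ h₂
    exact h₁.unique_of_alpha_ne_zero hw hn hp
      (h₁.alpha_ne_zero hw hp hne₁) (h₂.alpha_ne_zero hw hp hne₂) h₂

/-- **At most one nontrivial elastic nonholonomic impact.**
Let `w 1, …, w m, n` be linearly independent in a finite-dimensional real inner
product space and let the pre-impact momentum `p⁻` satisfy the constraints
`⟪p⁻, w k⟫ = 0`.  Then `(0,0)` solves the elastic impact equations, every
solution with `α = 0` is `(0,0)`, there is at most one solution with `α ≠ 0`,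
and hence at most one nontrivial solution `(lam, α) ≠ (0,0)`. -/
theorem elastic_impact_at_most_one_nontrivial_solution
    {V : Type*} [NormedAddCommGroup V] [InnerProductSpace ℝ V]
    [FiniteDimensional ℝ V] {m : ℕ} (w : Fin m → V) (n : V)
    (hind : LinearIndependent ℝ (Fin.snoc w n : Fin (m + 1) → V))
    (p : V) (hp : ∀ k, ⟪p, w k⟫ = 0) :
    IsImpactSolution w n p 0 0 ∧
    (∀ lam : Fin m → ℝ, IsImpactSolution w n p lam 0 → lam = 0) ∧
    (∀ (lam₁ lam₂ : Fin m → ℝ) (α₁ α₂ : ℝ), α₁ ≠ 0 → α₂ ≠ 0 →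
      IsImpactSolution w n p lam₁ α₁ → IsImpactSolution w n p lam₂ α₂ →
      lam₁ = lam₂ ∧ α₁ = α₂) ∧
    (∀ (lam₁ lam₂ : Fin m → ℝ) (α₁ α₂ : ℝ),
      (lam₁, α₁) ≠ (0, 0) → (lam₂, α₂) ≠ (0, 0) →
      IsImpactSolution w n p lam₁ α₁ → IsImpactSolution w n p lam₂ α₂ →
      lam₁ = lam₂ ∧ α₁ = α₂) :=
  elastic_impact_at_most_one_nontrivial_solution_general w n hind p hp
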